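/- Let α ∈ ℕ^+ and let P be a graded right ideal of A(f), f = z(z+α). Then the following are equivalent: (i) P is projective; (ii) Ext¹_A(Z, P) = 0 where Z = A/(y^α, x, z)A is the finite-dimensional simple module; (iii) Hom_A(Z, A/P) = 0; (iv) A/P has projective dimension at most 1. -/

import Mathlib

open Polynomial

noncomputable section

/-- The defining relations of the generalized Weyl algebra `A(f)` over `k[z]` with
`σ(z) = z + 1`: `xz = σ(z)x`, `yz = σ⁻¹(z)y`, `xy = f`, `yx = σ⁻¹(f)`.
Generators: `0 ↦ x`, `1 ↦ y`, `2 ↦ z`. -/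
inductive gwaRel (k : Type) [Field k] (f : Polynomial k) :
    FreeAlgebra k (Fin 3) → FreeAlgebra k (Fin 3) → Prop
  | xz : gwaRel k f (FreeAlgebra.ι k 0 * FreeAlgebra.ι k 2)
      ((FreeAlgebra.ι k 2 + 1) * FreeAlgebra.ι k 0)
  | yz : gwaRel k f (FreeAlgebra.ι k 1 * FreeAlgebra.ι k 2)
      ((FreeAlgebra.ι k 2 - 1) * FreeAlgebra.ι k 1)
  | xy : gwaRel k f (FreeAlgebra.ι k 0 * FreeAlgebra.ι k 1)
      (aeval (FreeAlgebra.ι k 2) f)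
  | yx : gwaRel k f (FreeAlgebra.ι k 1 * FreeAlgebra.ι k 0)
      (aeval (FreeAlgebra.ι k 2) (f.comp (X - 1)))

/-- The generalized Weyl algebra `A(f) = k[z]⟨x,y⟩ / (xz-σ(z)x, yz-σ⁻¹(z)y, xy-f, yx-σ⁻¹(f))`. -/
abbrev GWA (k : Type) [Field k] (f : Polynomial k) := RingQuot (gwaRel k f)

def gwaX (k : Type) [Field k] (f : Polynomial k) : GWA k f :=
  RingQuot.mkAlgHom k (gwaRel k f) (FreeAlgebra.ι k 0)

def gwaY (k : Type) [Field k] (f : Polynomial k) : GWA k f :=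
  RingQuot.mkAlgHom k (gwaRel k f) (FreeAlgebra.ι k 1)

def gwaZ (k : Type) [Field k] (f : Polynomial k) : GWA k f :=
  RingQuot.mkAlgHom k (gwaRel k f) (FreeAlgebra.ι k 2)

/-- The canonical `k[z]`-module generator of the degree-`n` component of `A(f)`:
`xⁿ` for `n ≥ 0` and `y⁻ⁿ` for `n < 0`. -/
def gwaMon (k : Type) [Field k] (f : Polynomial k) (n : ℤ) : GWA k f :=
  if 0 ≤ n then gwaX k f ^ n.toNat else gwaY k f ^ (-n).toNat

/-- The degree-`n` component of `A(f)` (as a `k`-subspace): the left `k[z]`-span of the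
canonical monomial `mₙ`. -/
def gwaComp (k : Type) [Field k] (f : Polynomial k) (n : ℤ) : Submodule k (GWA k f) :=
  Submodule.span k {w | ∃ q : Polynomial k, w = aeval (gwaZ k f) q * gwaMon k f n}

/-- `A(z(z+α))` for a positive integer `α`. -/
abbrev Acong (k : Type) [Field k] (α : ℕ+) : Type := GWA k (X * (X + C (α : k)))

/-- The right ideal `(y^α, x, z)A` defining the finite-dimensional simple module `Z`. -/
abbrev Icong (k : Type) [Field k] (α : ℕ+) : Submodule (Acong k α)ᵐᵒᵖ (Acong k α) :=
  Submodule.span (Acong k α)ᵐᵒᵖ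
    {gwaY k (X * (X + C (α : k))) ^ (α : ℕ), gwaX k (X * (X + C (α : k))),
      gwaZ k (X * (X + C (α : k)))}

/-!
`A(f)` embeds in the skew Laurent ring `k[z][x, x⁻¹; σ]` by `y ↦ x⁻¹ f`. A nonzero graded right
ideal `P` thus becomes a family of polynomials `gₙ`, one for each degree, with
`gₙ = gₙ₊₁ aₙ` and `aₙ bₙ = σⁿ(f)`, where `aₙ` and `bₙ` measure how far `x : Pₙ → Pₙ₊₁` and
`y : Pₙ₊₁ → Pₙ` are from being onto. Left multiplication makes `k[z]` act on `P`, and projectivity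
of `P` is local on `k[z]`: near a maximal ideal `M`, `P` is free on `gₙ` as soon as no `aᵢ` with
`n ≤ i` and no `bⱼ` with `j < n` lies in `M`. For `f = z(z + α)` an `M` containing some `σⁱ(f)` is
generated by `z + m` for a unique integer `m`, and then `i` is `m` or `m - α`. Such a degree `n`
therefore fails to exist only if both `aₘ` and `bₘ₋α` lie in `M`, and in that case
`gₘ / (z + m)` is the degree-`m` component of a nonzero map `Z → A / P`.
-/

section HomologicalAlgebra

universe u v

/-- Finite generation is what makes a map to a free module land in finitely many coordinates. -/
theorem exists_extend_of_projective {R F N P : Type*} [Semiring R] [AddCommMonoid F] [Module R F]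
    [AddCommMonoid N] [Module R N] [AddCommMonoid P] [Module R P] [Module.Finite R N]
    [Module.Projective R P] {j : N →ₗ[R] F} (hj : ∀ ψ : N →ₗ[R] R, ∃ Ψ : F →ₗ[R] R, Ψ ∘ₗ j = ψ)
    (ψ : N →ₗ[R] P) : ∃ Ψ : F →ₗ[R] P, Ψ ∘ₗ j = ψ := by
  classical
  obtain ⟨s, hs⟩ := Module.projective_def'.1 ‹Module.Projective R P›
  choose Ψ hΨ using fun p : P => hj (Finsupp.lapply p ∘ₗ s ∘ₗ ψ)
  obtain ⟨t, ht⟩ := Module.Finite.fg_top (R := R) (M := N)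
  let T : Finset P := t.biUnion fun a => (s (ψ a)).support
  have hfinite : (∑ p ∈ T, Finsupp.lsingle p ∘ₗ Ψ p) ∘ₗ j = s ∘ₗ ψ := by
    refine LinearMap.ext_on ht fun a ha => ?_
    have hΨa (p : P) : Ψ p (j a) = s (ψ a) p := LinearMap.congr_fun (hΨ p) a
    simp only [LinearMap.comp_apply, LinearMap.sum_apply, Finsupp.lsingle_apply, hΨa]
    have hsub : (s (ψ a)).support ⊆ T :=
      Finset.subset_biUnion_of_mem (fun a => (s (ψ a)).support) ha
    exact (Finsupp.sum_of_support_subset _ hsub Finsupp.single (by simp)).symm.trans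
      (Finsupp.sum_single _)
  refine ⟨Finsupp.linearCombination R id ∘ₗ ∑ p ∈ T, Finsupp.lsingle p ∘ₗ Ψ p, ?_⟩
  rw [LinearMap.comp_assoc, hfinite, ← LinearMap.comp_assoc, hs, LinearMap.id_comp]

variable {R : Type u} [Ring R] {F N P : Type v} [AddCommGroup F] [Module R F]
  [AddCommGroup N] [Module R N] [AddCommGroup P] [Module R P]

/-- The vanishing of `Ext¹_R(N, P)` in Yoneda form: every short exact sequence
`0 → P → E → N → 0` splits. -/
def ExtensionsSplit (R : Type u) [Ring R] (N P : Type v) [AddCommGroup N] [Module R N]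
    [AddCommGroup P] [Module R P] : Prop :=
  ∀ (E : Type v) (_ : AddCommGroup E) (_ : Module R E) (ι : P →ₗ[R] E) (π : E →ₗ[R] N),
    Function.Injective ι → Function.Surjective π → LinearMap.range ι = LinearMap.ker π →
    ∃ s : N →ₗ[R] E, π.comp s = LinearMap.id

theorem exists_comp_eq_of_forall_mem_range {ι : P →ₗ[R] F} (hι : Function.Injective ι)
    {θ : N →ₗ[R] F} (h : ∀ a, θ a ∈ LinearMap.range ι) : ∃ ψ : N →ₗ[R] P, ι ∘ₗ ψ = θ := by
  let e : P ≃ₗ[R] LinearMap.range ι := LinearEquiv.ofInjective ι hι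
  refine ⟨e.symm ∘ₗ θ.codRestrict _ h, LinearMap.ext fun a => ?_⟩
  exact congrArg Subtype.val (e.apply_symm_apply ⟨θ a, h a⟩)

theorem extensionsSplit_quotient_of_forall_exists_extend [Module.Projective R F]
    {I : Submodule R F} (hI : ∀ ψ : I →ₗ[R] P, ∃ Ψ : F →ₗ[R] P, Ψ ∘ₗ I.subtype = ψ) :
    ExtensionsSplit R (F ⧸ I) P := by
  intro E _ _ ι π hι hπ hexact
  obtain ⟨θ, hθ⟩ := Module.projective_lifting_property π I.mkQ hπ
  have hθI (a : I) : θ a ∈ LinearMap.range ι := by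
    rw [hexact, LinearMap.mem_ker, ← LinearMap.comp_apply, hθ]
    simp
  obtain ⟨ψ, hψ⟩ := exists_comp_eq_of_forall_mem_range (θ := θ ∘ₗ I.subtype) hι hθI
  obtain ⟨Ψ, rfl⟩ := hI ψ
  have hιΨ (a : I) : ι (Ψ a) = θ a := LinearMap.congr_fun hψ a
  have hπι : π ∘ₗ ι = 0 := LinearMap.range_le_ker_iff.1 hexact.le
  refine ⟨I.liftQ (θ - ι ∘ₗ Ψ) fun a ha => ?_, Submodule.linearMap_qext _ ?_⟩
  · simp [hιΨ ⟨a, ha⟩]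
  · rw [LinearMap.comp_assoc, Submodule.liftQ_mkQ, LinearMap.comp_sub, ← LinearMap.comp_assoc, hθ,
      hπι, LinearMap.zero_comp, sub_zero, LinearMap.id_comp]

/-- The extension that is split is the pullback of `F → F / K` along `φ`. -/
theorem hom_quotient_eq_zero_of_extensionsSplit {K : Submodule R F} (hExt : ExtensionsSplit R N K)
    (hHom : ∀ ψ : N →ₗ[R] F, ψ = 0) (φ : N →ₗ[R] (F ⧸ K)) : φ = 0 := by
  let E : Submodule R (F × N) := LinearMap.eqLocus (K.mkQ ∘ₗ .fst R F N) (φ ∘ₗ .snd R F N)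
  let ι : K →ₗ[R] E := (LinearMap.inl R F N ∘ₗ K.subtype).codRestrict E fun p => by simp [E]
  let π : E →ₗ[R] N := LinearMap.snd R F N ∘ₗ E.subtype
  have hι : Function.Injective ι := fun p q h => Subtype.ext (congrArg (fun e : E => e.1.1) h)
  have hπ : Function.Surjective π := fun n => by
    obtain ⟨a, ha⟩ := K.mkQ_surjective (φ n)
    exact ⟨⟨(a, n), ha⟩, rfl⟩
  have hexact : LinearMap.range ι = LinearMap.ker π := by
    ext ⟨⟨a, n⟩, he⟩
    constructor
    · rintro ⟨p, hp⟩
      rw [← hp]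
      rfl
    · rintro (rfl : n = 0)
      have ha : K.mkQ a = φ 0 := he
      exact ⟨⟨a, by simpa using ha⟩, rfl⟩
  obtain ⟨s, hs⟩ := hExt E _ _ ι π hι hπ hexact
  have hfst : LinearMap.fst R F N ∘ₗ E.subtype ∘ₗ s = 0 := hHom _
  ext n
  calc φ n = φ (s n).1.2 := congrArg φ (LinearMap.congr_fun hs n).symm
    _ = K.mkQ (s n).1.1 := (s n).2.symm
    _ = 0 := by rw [show (s n).1.1 = 0 from LinearMap.congr_fun hfst n, map_zero]

theorem projective_of_projective_ker [Module.Projective R F] {K : Submodule R F}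
    (g : P →ₗ[R] (F ⧸ K)) (hg : Function.Surjective g) [Module.Projective R P]
    [Module.Projective R (LinearMap.ker g)] : Module.Projective R K := by
  obtain ⟨a, ha⟩ := Module.projective_lifting_property g K.mkQ hg
  obtain ⟨b, hb⟩ := Module.projective_lifting_property K.mkQ g K.mkQ_surjective
  have hga (x : F) : g (a x) = K.mkQ x := LinearMap.congr_fun ha x
  have hmkb (y : P) : K.mkQ (b y) = g y := LinearMap.congr_fun hb y
  have haK (x : K) : a x ∈ LinearMap.ker g := by simp [hga]
  have hbK (y : LinearMap.ker g) : b y ∈ K := by simpa using hmkb y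
  have hsub (x : F) : x - b (a x) ∈ K := by
    rw [← K.ker_mkQ, LinearMap.mem_ker, map_sub, hmkb, hga, sub_self]
  refine Module.Projective.of_split (M := LinearMap.ker g × F)
    (((a ∘ₗ K.subtype).codRestrict _ haK).prod K.subtype)
    (((b ∘ₗ Submodule.subtype _).codRestrict K hbK).coprod
      ((LinearMap.id - b ∘ₗ a).codRestrict K hsub)) ?_
  ext x
  exact add_sub_cancel (b (a x)) (x : F)

theorem projective_iff_exists_projective_ker [Module.Projective R F] {K : Submodule R F} :
    Module.Projective R K ↔ ∃ (Q : Type v) (_ : AddCommGroup Q) (_ : Module R Q)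
      (g : Q →ₗ[R] (F ⧸ K)), Module.Projective R Q ∧ Function.Surjective g ∧
        Module.Projective R (LinearMap.ker g) :=
  ⟨fun hK => ⟨F, _, _, K.mkQ, ‹_›, K.mkQ_surjective, by rwa [K.ker_mkQ]⟩,
    fun ⟨_, _, _, g, _, hg, _⟩ => projective_of_projective_ker g hg⟩

/-- An endomorphism factors through a projective module. When a commutative ring acts on a module
by endomorphisms, the scalars with this property form an ideal, which makes projectivity a local
question on that ring. -/
def FactorsThroughProjective (φ : Module.End R P) : Prop :=
  ∃ (Q : Type v) (_ : AddCommGroup Q) (_ : Module R Q) (i : P →ₗ[R] Q) (r : Q →ₗ[R] P),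
    Module.Projective R Q ∧ r ∘ₗ i = φ

namespace FactorsThroughProjective

variable {φ ψ : Module.End R P}

theorem zero : FactorsThroughProjective (0 : Module.End R P) :=
  ⟨PUnit, _, _, 0, 0, inferInstance, by simp⟩

theorem add : FactorsThroughProjective φ → FactorsThroughProjective ψ →
    FactorsThroughProjective (φ + ψ) := by
  rintro ⟨Q, _, _, i, r, _, rfl⟩ ⟨Q', _, _, i', r', _, rfl⟩
  exact ⟨Q × Q', _, _, i.prod i', r.coprod r', inferInstance, LinearMap.coprod_comp_prod ..⟩

theorem mul_left (ψ : Module.End R P) :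
    FactorsThroughProjective φ → FactorsThroughProjective (ψ * φ) := by
  rintro ⟨Q, _, _, i, r, hQ, rfl⟩
  exact ⟨Q, _, _, i, ψ ∘ₗ r, hQ, rfl⟩

theorem projective (h : FactorsThroughProjective (1 : Module.End R P)) :
    Module.Projective R P := by
  obtain ⟨Q, _, _, i, r, _, hri⟩ := h
  exact .of_split i r hri

theorem of_forall_mem_range [Module.Projective R F] {r : F →ₗ[R] P} (hr : Function.Injective r)
    (hφ : ∀ p, φ p ∈ LinearMap.range r) : FactorsThroughProjective φ :=
  have ⟨i, hi⟩ := exists_comp_eq_of_forall_mem_range hr hφ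
  ⟨F, _, _, i, r, ‹_›, hi⟩

end FactorsThroughProjective

theorem projective_of_forall_isMaximal {S : Type*} [CommRing S] (L : S →+* Module.End R P)
    (h : ∀ M : Ideal S, M.IsMaximal → ∃ s ∉ M, FactorsThroughProjective (L s)) :
    Module.Projective R P := by
  let J : Ideal S :=
    { carrier := {s | FactorsThroughProjective (L s)}
      zero_mem' := by simpa using FactorsThroughProjective.zero
      add_mem' hs ht := by simpa using hs.add ht
      smul_mem' c s hs := by simpa using hs.mul_left (L c) }
  have hJ : J = ⊤ := by
    by_contra hne
    obtain ⟨M, hM, hJM⟩ := J.exists_le_maximal hne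
    obtain ⟨s, hsM, hs⟩ := h M hM
    exact hsM (hJM hs)
  have hone : FactorsThroughProjective (L 1) := J.eq_top_iff_one.1 hJ
  rw [map_one] at hone
  exact hone.projective

end HomologicalAlgebra

/-- A ring as a right module over itself is free of rank one over its opposite ring. -/
def opEquivSelf (R : Type*) [Ring R] : Rᵐᵒᵖ ≃ₗ[Rᵐᵒᵖ] R :=
  { MulOpposite.opAddEquiv.symm with map_smul' := fun _ _ => rfl }

instance projective_mulOpposite_self {R : Type*} [Ring R] : Module.Projective Rᵐᵒᵖ R :=
  .of_equiv (opEquivSelf R)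

section DivisorChains

variable {R : Type*} [CommRing R]

theorem eventually_isUnit_of_eq_mul [IsDomain R] [IsNoetherianRing R] {q d : ℕ → R}
    (hq : ∀ n, q n ≠ 0) (hd : ∀ n, q n = q (n + 1) * d n) :
    ∀ᶠ n in Filter.atTop, IsUnit (d n) := by
  have hmono : Monotone fun n => Ideal.span {q n} := monotone_nat_of_le_succ fun n =>
    Ideal.span_singleton_le_span_singleton.2 (Dvd.intro _ (hd n).symm)
  obtain ⟨m, hm⟩ := monotone_stabilizes_iff_noetherian.2 ‹IsNoetherianRing R› ⟨_, hmono⟩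
  filter_upwards [Filter.eventually_ge_atTop m] with n hn
  have hspan : Ideal.span {q n} = Ideal.span {q (n + 1)} :=
    (hm n hn).symm.trans (hm (n + 1) (by omega))
  obtain ⟨c, hc⟩ := Ideal.span_singleton_le_span_singleton.1 hspan.ge
  refine IsUnit.of_mul_eq_one c (mul_left_cancel₀ (hq (n + 1)) ?_)
  rw [← mul_assoc, ← hd, ← hc, mul_one]

theorem exists_notMem_forall_prod_dvd {ι : Type*} {M : Ideal R} [M.IsPrime] {d : ι → R} {T : Set ι}
    (hM : ∀ i ∈ T, d i ∉ M) (hfin : {i ∈ T | ¬IsUnit (d i)}.Finite) :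
    ∃ s ∉ M, ∀ t : Finset ι, ↑t ⊆ T → ∏ i ∈ t, d i ∣ s := by
  classical
  refine ⟨∏ i ∈ hfin.toFinset, d i, fun h => ?_, fun t ht => ?_⟩
  · obtain ⟨i, hi, hiM⟩ := (Ideal.IsPrime.prod_mem_iff).1 h
    exact hM i (hfin.mem_toFinset.1 hi).1 hiM
  · rw [← Finset.prod_filter_mul_prod_filter_not t fun i => IsUnit (d i)]
    have hunit : IsUnit (∏ i ∈ t with IsUnit (d i), d i) :=
      (Finset.prod_induction _ IsUnit (fun _ _ => IsUnit.mul) isUnit_one (by simp))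
    refine hunit.mul_left_dvd.2 (Finset.prod_dvd_prod_of_subset _ _ _ fun i hi => ?_)
    obtain ⟨hit, hi⟩ := Finset.mem_filter.1 hi
    exact hfin.mem_toFinset.2 ⟨ht hit, hi⟩

theorem exists_forall_ge_not_forall_lt_not {p q : ℤ → Prop} (hp : ∀ᶠ i in Filter.atTop, ¬p i)
    (hq : ∀ᶠ i in Filter.atBot, ¬q i) (hpq : ∀ i j, p i → q j → i < j) :
    ∃ n, (∀ i ≥ n, ¬p i) ∧ ∀ i < n, ¬q i := by
  by_cases hex : ∃ i, p i
  · obtain ⟨N, hN⟩ := Filter.eventually_atTop.1 hp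
    obtain ⟨m, hm, hmax⟩ := Int.exists_greatest_of_bdd (P := p)
      ⟨N, fun i hi => le_of_not_ge fun hNi => hN i hNi hi⟩ hex
    refine ⟨m + 1, fun i hi hpi => ?_, fun i hi hqi => ?_⟩
    · linarith [hmax i hpi]
    · linarith [hpq m i hm hqi]
  · push Not at hex
    obtain ⟨N, hN⟩ := Filter.eventually_atBot.1 hq
    exact ⟨N, fun i _ => hex i, fun i hi => hN i hi.le⟩

end DivisorChains

section Polynomials

theorem semiconjBy_aeval {R A : Type*} [CommSemiring R] [Semiring A] [Algebra R A] {u a b : A}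
    (h : SemiconjBy u a b) (q : R[X]) : SemiconjBy u (aeval a q) (aeval b q) := by
  induction q using Polynomial.induction_on' with
  | add p q hp hq => simpa using hp.add_right hq
  | monomial n r =>
    have hr : SemiconjBy u (algebraMap R A r) (algebraMap R A r) :=
      (Algebra.commutes r u).symm
    simpa [aeval_monomial] using hr.mul_right (h.pow_right n)

theorem not_isCoprime_of_mem {R : Type*} [CommRing R] {M : Ideal R} (hM : M ≠ ⊤) {a b : R}
    (ha : a ∈ M) (hb : b ∈ M) : ¬IsCoprime a b := fun ⟨u, v, h⟩ =>
  hM (M.eq_top_iff_one.2 (h ▸ add_mem (M.mul_mem_left u ha) (M.mul_mem_left v hb)))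

variable {k : Type*} [Field k]

theorem isCoprime_X_add_intCast [CharZero k] {m n : ℤ} (h : m ≠ n) :
    IsCoprime (X + C (m : k)) (X + C (n : k)) := by
  have hunit : IsUnit (-(m : k) - -(n : k)) :=
    (sub_ne_zero.2 fun hmn => h (Int.cast_injective (neg_injective hmn))).isUnit
  simpa using isCoprime_X_sub_C_of_isUnit_sub hunit

theorem X_add_C_dvd_of_mem {M : Ideal k[X]} (hM : M ≠ ⊤) {r : k} {g : k[X]}
    (hr : X + C r ∈ M) (hg : g ∈ M) : X + C r ∣ g := by
  by_contra h
  exact not_isCoprime_of_mem hM hr hg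
    ((irreducible_of_degree_eq_one (degree_X_add_C r)).coprime_iff_not_dvd.2 h)

end Polynomials

namespace GWA

open MulOpposite

variable {k : Type} [Field k] {f : k[X]}

section RightAction

/-- Right multiplication by `x` on the skew Laurent ring `k[z][x, x⁻¹; σ]`. A family `h` stands for
the, possibly infinite, sum of the `h n * xⁿ`. -/
def rightX : Module.End k[X] (ℤ → k[X]) where
  toFun h n := h (n - 1)
  map_add' _ _ := rfl
  map_smul' _ _ := rfl

/-- Right multiplication by `y = x⁻¹ f` on the skew Laurent ring. -/
def rightY (f : k[X]) : Module.End k[X] (ℤ → k[X]) where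
  toFun h n := h (n + 1) * taylor (n : k) f
  map_add' _ _ := funext fun _ => add_mul ..
  map_smul' _ _ := funext fun _ => mul_assoc ..

/-- Right multiplication by `z` on the skew Laurent ring. -/
def rightZ : Module.End k[X] (ℤ → k[X]) where
  toFun h n := h n * (X + C (n : k))
  map_add' _ _ := funext fun _ => add_mul ..
  map_smul' _ _ := funext fun _ => mul_assoc ..

theorem unop_aeval_rightZ (q : k[X]) (h : ℤ → k[X]) (n : ℤ) :
    (aeval (op (rightZ (k := k))) q).unop h n = h n * taylor (n : k) q := by
  induction q using Polynomial.induction_on with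
  | C a => simp [Polynomial.smul_eq_C_mul, mul_comm]
  | add p q hp hq => simp [hp, hq, mul_add]
  | monomial m a ih =>
    rw [pow_succ, ← mul_assoc, map_mul, aeval_X, taylor_mul, taylor_X, ← mul_assoc, ← ih]
    rfl

theorem rightZ_mul_rightX : rightZ * rightX = rightX * (rightZ (k := k) + 1) := by
  refine LinearMap.ext fun h => funext fun n => ?_
  change h (n - 1) * (X + C (n : k)) = h (n - 1) * (X + C ((n - 1 : ℤ) : k)) + h (n - 1)
  rw [Int.cast_sub, Int.cast_one, C_sub, C_1]
  ring

theorem rightZ_mul_rightY : rightZ * rightY f = rightY f * (rightZ - 1) := by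
  refine LinearMap.ext fun h => funext fun n => ?_
  change h (n + 1) * taylor (n : k) f * (X + C (n : k)) =
    (h (n + 1) * (X + C ((n + 1 : ℤ) : k)) - h (n + 1)) * taylor (n : k) f
  rw [Int.cast_add, Int.cast_one, C_add, C_1]
  ring

theorem op_rightX_mul_op_rightY :
    op rightX * op (rightY f) = aeval (op (rightZ (k := k))) f := by
  refine unop_injective (LinearMap.ext fun h => funext fun n => ?_)
  rw [unop_aeval_rightZ, ← op_mul, unop_op]
  simp [rightX, rightY]

theorem op_rightY_mul_op_rightX :
    op (rightY f) * op rightX = aeval (op (rightZ (k := k))) (f.comp (X - 1)) := by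
  have hf : f.comp (X - 1) = taylor (-1) f := by simp [taylor_apply, sub_eq_add_neg]
  refine unop_injective (LinearMap.ext fun h => funext fun n => ?_)
  rw [unop_aeval_rightZ, hf, taylor_taylor, ← op_mul, unop_op]
  simp [rightX, rightY, sub_eq_add_neg]

/-- The right action of `A(f)` on the skew Laurent ring, as a homomorphism to the opposite of the
endomorphism ring. -/
def rep (f : k[X]) : GWA k f →ₐ[k] (Module.End k[X] (ℤ → k[X]))ᵐᵒᵖ :=
  RingQuot.liftAlgHom k ⟨FreeAlgebra.lift k ![op rightX, op (rightY f), op rightZ], by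
    rintro _ _ (_ | _ | _ | _)
    · simpa using congrArg op rightZ_mul_rightX
    · simpa using congrArg op (rightZ_mul_rightY (f := f))
    · simpa [← aeval_algHom_apply] using op_rightX_mul_op_rightY
    · simpa [← aeval_algHom_apply] using op_rightY_mul_op_rightX⟩

/-- The endomorphism of the skew Laurent ring by which an element of `A(f)` acts on the right. -/
def act : GWA k f →ₗ[k] Module.End k[X] (ℤ → k[X]) :=
  (opLinearEquiv k).symm.toLinearMap ∘ₗ (rep f).toLinearMap

theorem act_mul (a b : GWA k f) : act (a * b) = act b * act a := by
  simp [act]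

theorem act_X : act (gwaX k f) = rightX := by
  simp [act, rep, gwaX]

theorem act_Y : act (gwaY k f) = rightY f := by
  simp [act, rep, gwaY]

theorem act_aeval_apply (q : k[X]) (h : ℤ → k[X]) (n : ℤ) :
    act (aeval (gwaZ k f) q) h n = h n * taylor (n : k) q := by
  have hZ : rep f (gwaZ k f) = op rightZ := by simp [rep, gwaZ]
  rw [← unop_aeval_rightZ, ← hZ, aeval_algHom_apply]
  rfl

/-- The product of the `σⁱ(f)` for `j ≤ i < n`, which is `1` when `n ≤ j`; it is the coefficient of
`xʲ` in `xⁿ mⱼ₋ₙ`, where `mᵢ` is `gwaMon k f i`. -/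
def shiftProd (f : k[X]) (j n : ℤ) : k[X] :=
  ∏ i ∈ Finset.Ico j n, taylor (i : k) f

theorem shiftProd_of_le {j n : ℤ} (h : n ≤ j) : shiftProd f j n = 1 := by
  rw [shiftProd, Finset.Ico_eq_empty_of_le h, Finset.prod_empty]

theorem shiftProd_mul_shiftProd {i j n : ℤ} (hij : i ≤ j) (hjn : j ≤ n) :
    shiftProd f i j * shiftProd f j n = shiftProd f i n := by
  rw [shiftProd, shiftProd, shiftProd, ← Finset.Ico_union_Ico_eq_Ico hij hjn,
    Finset.prod_union (Finset.Ico_disjoint_Ico_consecutive i j n)]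

theorem shiftProd_self_add_one (n : ℤ) : shiftProd f n (n + 1) = taylor (n : k) f := by
  rw [shiftProd, Finset.Ico_add_one_right_eq_Icc, Finset.Icc_self, Finset.prod_singleton]

theorem shiftProd_ne_zero (hf : f ≠ 0) (j n : ℤ) : shiftProd f j n ≠ 0 :=
  Finset.prod_ne_zero_iff.2 fun i _ => (taylor_eq_zero (i : k) f).not.2 hf

theorem act_X_pow_apply (m : ℕ) (h : ℤ → k[X]) (n : ℤ) :
    act (gwaX k f ^ m) h n = h (n - m) := by
  induction m generalizing n with
  | zero => simp [act]
  | succ m ih =>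
    rw [pow_succ, act_mul, act_X]
    simp only [Module.End.mul_apply, rightX, LinearMap.coe_mk, AddHom.coe_mk, ih]
    congr 1
    push_cast
    ring

theorem act_Y_pow_apply (m : ℕ) (h : ℤ → k[X]) (n : ℤ) :
    act (gwaY k f ^ m) h n = h (n + m) * shiftProd f n (n + m) := by
  induction m generalizing n with
  | zero => simp [act, shiftProd]
  | succ m ih =>
    rw [pow_succ, act_mul, act_Y]
    simp only [Module.End.mul_apply, rightY, LinearMap.coe_mk, AddHom.coe_mk, ih]
    rw [← shiftProd_self_add_one, mul_assoc, mul_comm (shiftProd f _ _),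
      shiftProd_mul_shiftProd (by lia) (by lia), add_assoc, add_comm 1, Nat.cast_succ]

theorem act_mon_apply (i : ℤ) (h : ℤ → k[X]) (n : ℤ) :
    act (gwaMon k f i) h n = h (n - i) * shiftProd f n (n - i) := by
  rw [gwaMon]
  split_ifs with hi
  · rw [act_X_pow_apply, Int.toNat_of_nonneg hi, shiftProd_of_le (by lia), mul_one]
  · rw [act_Y_pow_apply, Int.toNat_of_nonneg (by lia), sub_eq_add_neg]

theorem act_aeval_single (q h : k[X]) (n : ℤ) :
    act (aeval (gwaZ k f) q) (Pi.single n h) = Pi.single n (h * taylor (n : k) q) := by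
  funext j
  rw [act_aeval_apply]
  rcases eq_or_ne j n with rfl | hj
  · simp
  · simp [hj]

theorem act_mon_single (i : ℤ) (h : k[X]) (n : ℤ) :
    act (gwaMon k f i) (Pi.single n h) = Pi.single (n + i) (h * shiftProd f (n + i) n) := by
  funext j
  rw [act_mon_apply]
  rcases eq_or_ne j (n + i) with rfl | hj
  · simp
  · rw [Pi.single_eq_of_ne hj, Pi.single_eq_of_ne (by lia), zero_mul]

end RightAction

section NormalForm

theorem X_mul_Z : gwaX k f * gwaZ k f = (gwaZ k f + 1) * gwaX k f := by
  simpa [gwaX, gwaZ] using RingQuot.mkAlgHom_rel k (gwaRel.xz (k := k) (f := f))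

theorem Y_mul_Z : gwaY k f * gwaZ k f = (gwaZ k f - 1) * gwaY k f := by
  simpa [gwaY, gwaZ] using RingQuot.mkAlgHom_rel k (gwaRel.yz (k := k) (f := f))

theorem X_mul_Y : gwaX k f * gwaY k f = aeval (gwaZ k f) f := by
  simpa [gwaX, gwaY, gwaZ, ← aeval_algHom_apply] using
    RingQuot.mkAlgHom_rel k (gwaRel.xy (k := k) (f := f))

theorem Y_mul_X : gwaY k f * gwaX k f = aeval (gwaZ k f) (f.comp (X - 1)) := by
  rw [gwaZ, aeval_algHom_apply]
  simpa [gwaX, gwaY] using RingQuot.mkAlgHom_rel k (gwaRel.yx (k := k) (f := f))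

theorem mon_natCast (m : ℕ) : gwaMon k f m = gwaX k f ^ m := by
  simp [gwaMon]

theorem mon_neg_natCast (m : ℕ) : gwaMon k f (-m) = gwaY k f ^ m := by
  rcases m.eq_zero_or_pos with rfl | hm
  · simp [gwaMon]
  · simp [gwaMon, hm.ne']

theorem semiconjBy_mon_Z (n : ℤ) :
    SemiconjBy (gwaMon k f n) (gwaZ k f) (gwaZ k f + algebraMap k _ (n : k)) := by
  have hX : SemiconjBy (gwaX k f) (gwaZ k f) (gwaZ k f + 1) := X_mul_Z
  have hY : SemiconjBy (gwaY k f) (gwaZ k f) (gwaZ k f - 1) := Y_mul_Z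
  obtain ⟨m, rfl | rfl⟩ := n.eq_nat_or_neg
  · rw [mon_natCast]
    induction m with
    | zero => simp
    | succ m ih => simpa [pow_succ, add_assoc] using (ih.add_right (.one_right _)).mul_left hX
  · rw [mon_neg_natCast]
    induction m with
    | zero => simp
    | succ m ih =>
      simpa [pow_succ, sub_eq_add_neg, add_assoc, add_comm (-1 : GWA k f)] using
        (ih.sub_right (.one_right _)).mul_left hY

theorem mon_mul_aeval (n : ℤ) (q : k[X]) :
    gwaMon k f n * aeval (gwaZ k f) q =
      aeval (gwaZ k f) (taylor (n : k) q) * gwaMon k f n := by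
  have hshift : aeval (gwaZ k f) (taylor (n : k) q) =
      aeval (gwaZ k f + algebraMap k _ (n : k)) q := by
    simp [taylor_apply, aeval_comp]
  rw [hshift]
  exact semiconjBy_aeval (semiconjBy_mon_Z n) q

theorem aeval_mul_mon (n : ℤ) (q : k[X]) :
    aeval (gwaZ k f) q * gwaMon k f n =
      gwaMon k f n * aeval (gwaZ k f) (taylor (-n : k) q) := by
  rw [mon_mul_aeval, taylor_taylor, add_neg_cancel, taylor_zero]

theorem exists_mon_mul_X_eq (n : ℤ) :
    ∃ q : k[X], gwaMon k f n * gwaX k f = aeval (gwaZ k f) q * gwaMon k f (n + 1) := by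
  rcases le_or_gt 0 n with hn | hn
  · lift n to ℕ using hn
    refine ⟨1, ?_⟩
    rw [← Nat.cast_succ, mon_natCast, mon_natCast, ← pow_succ, map_one, one_mul]
  · obtain ⟨m, rfl⟩ : ∃ m : ℕ, n = -(m + 1 : ℕ) := ⟨(-n - 1).toNat, by lia⟩
    refine ⟨taylor ((-m : ℤ) : k) (f.comp (X - 1)), ?_⟩
    have hm : -((m + 1 : ℕ) : ℤ) + 1 = -m := by lia
    rw [hm, ← mon_mul_aeval, ← Y_mul_X, mon_neg_natCast, mon_neg_natCast, pow_succ, mul_assoc]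

theorem exists_mon_mul_Y_eq (n : ℤ) :
    ∃ q : k[X], gwaMon k f n * gwaY k f = aeval (gwaZ k f) q * gwaMon k f (n - 1) := by
  rcases lt_or_ge 0 n with hn | hn
  · obtain ⟨m, rfl⟩ : ∃ m : ℕ, n = (m + 1 : ℕ) := ⟨(n - 1).toNat, by lia⟩
    refine ⟨taylor ((m : ℤ) : k) f, ?_⟩
    have hm : ((m + 1 : ℕ) : ℤ) - 1 = m := by lia
    rw [hm, ← mon_mul_aeval, ← X_mul_Y, mon_natCast, mon_natCast, pow_succ, mul_assoc]
  · obtain ⟨m, rfl⟩ : ∃ m : ℕ, n = -m := ⟨(-n).toNat, by lia⟩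
    refine ⟨1, ?_⟩
    have hm : -(m : ℤ) - 1 = -(m + 1 : ℕ) := by lia
    rw [hm, mon_neg_natCast, mon_neg_natCast, ← pow_succ, map_one, one_mul]

theorem mul_mem_of_generators {S : Submodule k (GWA k f)} (hX : ∀ a ∈ S, a * gwaX k f ∈ S)
    (hY : ∀ a ∈ S, a * gwaY k f ∈ S) (hZ : ∀ a ∈ S, a * gwaZ k f ∈ S) (b : GWA k f) :
    ∀ a ∈ S, a * b ∈ S := by
  obtain ⟨b, rfl⟩ := RingQuot.mkAlgHom_surjective k (gwaRel k f) b
  induction b using FreeAlgebra.induction with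
  | grade0 r =>
    intro a ha
    rw [AlgHom.commutes, ← Algebra.commutes, ← Algebra.smul_def]
    exact S.smul_mem r ha
  | grade1 i => fin_cases i <;> assumption
  | mul b c hb hc =>
    intro a ha
    rw [map_mul, ← mul_assoc]
    exact hc _ (hb a ha)
  | add b c hb hc =>
    intro a ha
    rw [map_add, mul_add]
    exact S.add_mem (hb a ha) (hc a ha)

/-- The element of `A(f)` with prescribed left coordinates on the monomials `gwaMon k f n`. -/
def ofCoeff : (ℤ →₀ k[X]) →ₗ[k] GWA k f :=
  Finsupp.lsum k fun n =>
    LinearMap.mulRight k (gwaMon k f n) ∘ₗ (aeval (gwaZ k f)).toLinearMap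

theorem ofCoeff_single (n : ℤ) (q : k[X]) :
    ofCoeff (Finsupp.single n q) = aeval (gwaZ k f) q * gwaMon k f n := by
  simp [ofCoeff]

theorem ofCoeff_surjective : Function.Surjective (ofCoeff (f := f)) := by
  have hmul {g : GWA k f} (hg : ∀ n, ∃ (q : k[X]) (m : ℤ),
      gwaMon k f n * g = aeval (gwaZ k f) q * gwaMon k f m) :
      ∀ a ∈ LinearMap.range (ofCoeff (f := f)), a * g ∈ LinearMap.range (ofCoeff (f := f)) := by
    rintro _ ⟨w, rfl⟩
    induction w using Finsupp.induction_linear with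
    | zero => simp
    | add v w hv hw =>
      rw [map_add, add_mul]
      exact add_mem hv hw
    | single n p =>
      obtain ⟨q, m, hq⟩ := hg n
      exact ⟨.single m (p * q), by
        rw [ofCoeff_single, ofCoeff_single, mul_assoc, hq, map_mul, mul_assoc]⟩
  have hone : (1 : GWA k f) ∈ LinearMap.range (ofCoeff (f := f)) :=
    ⟨.single 0 1, by simp [ofCoeff_single, gwaMon]⟩
  intro a
  rw [← one_mul a]
  refine mul_mem_of_generators (hmul fun n => ?_) (hmul fun n => ?_) (hmul fun n => ?_) a 1 hone
  · obtain ⟨q, hq⟩ := exists_mon_mul_X_eq (f := f) n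
    exact ⟨q, _, hq⟩
  · obtain ⟨q, hq⟩ := exists_mon_mul_Y_eq (f := f) n
    exact ⟨q, _, hq⟩
  · exact ⟨taylor (n : k) X, n, by rw [← mon_mul_aeval, aeval_X]⟩

@[elab_as_elim]
theorem monomial_induction {motive : GWA k f → Prop} (a : GWA k f) (zero : motive 0)
    (add : ∀ a b, motive a → motive b → motive (a + b))
    (monomial : ∀ n (q : k[X]), motive (aeval (gwaZ k f) q * gwaMon k f n)) : motive a := by
  obtain ⟨w, rfl⟩ := ofCoeff_surjective a
  induction w using Finsupp.induction_linear with
  | zero => rwa [map_zero]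
  | add v w hv hw =>
    rw [map_add]
    exact add _ _ hv hw
  | single n q =>
    rw [ofCoeff_single]
    exact monomial n q

/-- The coefficients of an element of `A(f)` in the skew Laurent ring, that is, of the image of `1`
under its action. They differ from the coordinates on the monomials `gwaMon k f n` by the factors
`shiftProd f n 0`. -/
def coeff : GWA k f →ₗ[k] (ℤ → k[X]) where
  toFun a := act a (Pi.single 0 1)
  map_add' a b := by rw [map_add, LinearMap.add_apply]
  map_smul' r a := by rw [map_smul, LinearMap.smul_apply, RingHom.id_apply]

theorem coeff_mul (a b : GWA k f) : coeff (a * b) = act b (coeff a) :=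
  LinearMap.congr_fun (act_mul a b) _

theorem coeff_monomial (n : ℤ) (q : k[X]) :
    coeff (aeval (gwaZ k f) q * gwaMon k f n) = Pi.single n (q * shiftProd f n 0) := by
  rw [coeff_mul]
  simp only [coeff, LinearMap.coe_mk, AddHom.coe_mk]
  rw [act_aeval_single, act_mon_single]
  simp

theorem coeff_ofCoeff (w : ℤ →₀ k[X]) (n : ℤ) :
    coeff (ofCoeff (f := f) w) n = w n * shiftProd f n 0 := by
  induction w using Finsupp.induction_linear with
  | zero => simp
  | add v w hv hw => rw [map_add, map_add, Pi.add_apply, hv, hw, Finsupp.add_apply, add_mul]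
  | single m q =>
    rw [ofCoeff_single, coeff_monomial]
    rcases eq_or_ne n m with rfl | hn
    · simp
    · simp [hn]

theorem coeff_one : coeff (1 : GWA k f) = Pi.single 0 1 := by
  simpa [gwaMon, shiftProd] using coeff_monomial (f := f) 0 1

theorem coeff_mul_aeval (a : GWA k f) (q : k[X]) (n : ℤ) :
    coeff (a * aeval (gwaZ k f) q) n = coeff a n * taylor (n : k) q := by
  rw [coeff_mul, act_aeval_apply]

theorem coeff_mul_mon (a : GWA k f) (i n : ℤ) :
    coeff (a * gwaMon k f i) n = coeff a (n - i) * shiftProd f n (n - i) := by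
  rw [coeff_mul, act_mon_apply]

theorem coeff_aeval_mul (q : k[X]) (a : GWA k f) :
    coeff (aeval (gwaZ k f) q * a) = q • coeff a := by
  have hq : coeff (aeval (gwaZ k f) q) = q • coeff (1 : GWA k f) := by
    rw [coeff_one, ← Pi.single_smul, smul_eq_mul, mul_one]
    simpa [gwaMon, shiftProd] using coeff_monomial (f := f) 0 q
  rw [coeff_mul, hq, map_smul, ← coeff_mul, one_mul]

theorem shiftProd_dvd_coeff (a : GWA k f) (n : ℤ) : shiftProd f n 0 ∣ coeff a n := by
  obtain ⟨w, rfl⟩ := ofCoeff_surjective a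
  rw [coeff_ofCoeff]
  exact dvd_mul_left _ _

theorem finite_support_coeff (a : GWA k f) : (coeff a).support.Finite := by
  obtain ⟨w, rfl⟩ := ofCoeff_surjective a
  refine w.support.finite_toSet.subset fun n hn => ?_
  rw [Function.mem_support, coeff_ofCoeff] at hn
  simpa using left_ne_zero_of_mul hn

theorem coeff_injective (hf : f ≠ 0) : Function.Injective (coeff (f := f)) := by
  intro a b hab
  obtain ⟨v, rfl⟩ := ofCoeff_surjective a
  obtain ⟨w, rfl⟩ := ofCoeff_surjective b
  congr 1
  ext1 n
  have hn := congrFun hab n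
  rw [coeff_ofCoeff, coeff_ofCoeff] at hn
  exact mul_right_cancel₀ (shiftProd_ne_zero hf n 0) hn

theorem coeff_mul_ofCoeff {u : GWA k f} {n : ℤ} {h : k[X]} (hu : coeff u = Pi.single n h)
    (w : ℤ →₀ k[X]) (i : ℤ) :
    coeff (u * ofCoeff w) (n + i) = h * taylor (n : k) (w i) * shiftProd f (n + i) n := by
  induction w using Finsupp.induction_linear with
  | zero => simp
  | add v w hv hw =>
    rw [map_add, mul_add, map_add, Pi.add_apply, hv, hw, Finsupp.add_apply, map_add, mul_add,
      add_mul]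
  | single m q =>
    rw [ofCoeff_single, ← mul_assoc, coeff_mul, coeff_mul, hu, act_aeval_single, act_mon_single]
    rcases eq_or_ne i m with rfl | hi
    · simp
    · simp [hi]

theorem isLeftRegular_of_coeff_eq_single (hf : f ≠ 0) {u : GWA k f} {n : ℤ} {h : k[X]}
    (hh : h ≠ 0) (hu : coeff u = Pi.single n h) : IsLeftRegular u := by
  intro a b hab
  obtain ⟨v, rfl⟩ := ofCoeff_surjective a
  obtain ⟨w, rfl⟩ := ofCoeff_surjective b
  congr 1
  ext1 i
  have hi := congrFun (congrArg coeff hab) (n + i)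
  simp only [coeff_mul_ofCoeff hu] at hi
  exact taylor_injective _ (mul_left_cancel₀ hh (mul_right_cancel₀ (shiftProd_ne_zero hf _ _) hi))

theorem exists_coeff_mul_eq (hf : f ≠ 0) {u : GWA k f} {n : ℤ} {h : k[X]} (hh : h ≠ 0)
    (hu : coeff u = Pi.single n h) {g : ℤ → k[X]} (hfin : g.support.Finite)
    (hg : ∀ j, h * shiftProd f j n ∣ g j) : ∃ b, coeff (u * b) = g := by
  choose w hw using hg
  have hw0 : w.support ⊆ g.support := fun j hj => by
    rw [Function.mem_support, hw]
    exact mul_ne_zero (mul_ne_zero hh (shiftProd_ne_zero hf j n)) hj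
  have hfin' : (fun i => taylor (-n : k) (w (n + i))).support.Finite := by
    refine ((hfin.subset hw0).preimage (add_right_injective n).injOn).subset fun i hi => ?_
    exact fun hwi => hi ((congrArg _ hwi).trans (map_zero _))
  refine ⟨ofCoeff (.ofSupportFinite _ hfin'), funext fun j => ?_⟩
  obtain ⟨i, rfl⟩ : ∃ i, j = n + i := ⟨j - n, by lia⟩
  rw [coeff_mul_ofCoeff hu, Finsupp.ofSupportFinite_coe, taylor_taylor, add_neg_cancel,
    taylor_zero, hw]
  ring

end NormalForm

variable {P : Submodule (GWA k f)ᵐᵒᵖ (GWA k f)}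

section RightIdeals

theorem mul_mem_right {p : GWA k f} (hp : p ∈ P) (b : GWA k f) : p * b ∈ P :=
  P.smul_mem (op b) hp

/-- The coefficients of `xⁿ` of the homogeneous elements of degree `n` of a right ideal, which form
an ideal of `k[z]`. -/
def coeffIdeal (P : Submodule (GWA k f)ᵐᵒᵖ (GWA k f)) (n : ℤ) : Ideal k[X] where
  carrier := {h | ∃ u ∈ P, coeff u = Pi.single n h}
  zero_mem' := ⟨0, P.zero_mem, by rw [map_zero, Pi.single_zero]⟩
  add_mem' := by
    rintro g h ⟨u, hu, hug⟩ ⟨v, hv, hvh⟩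
    exact ⟨u + v, P.add_mem hu hv, by rw [map_add, hug, hvh, Pi.single_add]⟩
  smul_mem' := by
    rintro s h ⟨u, hu, huh⟩
    refine ⟨u * aeval (gwaZ k f) (taylor (-n : k) s), mul_mem_right hu _, ?_⟩
    rw [coeff_mul, huh, act_aeval_single, taylor_taylor, add_neg_cancel, taylor_zero, smul_eq_mul,
      mul_comm]

theorem mul_shiftProd_mem_coeffIdeal {m : ℤ} {h : k[X]} (hh : h ∈ coeffIdeal P m) (n : ℤ) :
    h * shiftProd f n m ∈ coeffIdeal P n := by
  obtain ⟨u, hu, huh⟩ := hh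
  refine ⟨u * gwaMon k f (n - m), mul_mem_right hu _, ?_⟩
  rw [coeff_mul, huh, act_mon_single, add_sub_cancel]

theorem shiftProd_dvd_of_mem_coeffIdeal {n : ℤ} {h : k[X]} (hh : h ∈ coeffIdeal P n) :
    shiftProd f n 0 ∣ h := by
  obtain ⟨u, -, huh⟩ := hh
  simpa [huh] using shiftProd_dvd_coeff u n

theorem mem_of_coeff_eq_single (hf : f ≠ 0) {a : GWA k f} {n : ℤ} {h : k[X]}
    (ha : coeff a = Pi.single n h) (hh : h ∈ coeffIdeal P n) : a ∈ P := by
  obtain ⟨u, hu, huh⟩ := hh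
  rwa [coeff_injective hf (ha.trans huh.symm)]

theorem coeff_mul_mem_coeffIdeal {a : GWA k f} (ha : ∀ n, coeff a n ∈ coeffIdeal P n)
    (b : GWA k f) (n : ℤ) : coeff (a * b) n ∈ coeffIdeal P n := by
  induction b using monomial_induction with
  | zero => simp
  | add b c hb hc =>
    rw [mul_add, map_add]
    exact add_mem hb hc
  | monomial i q =>
    rw [← mul_assoc, coeff_mul_mon, coeff_mul_aeval]
    exact mul_shiftProd_mem_coeffIdeal (Ideal.mul_mem_right _ _ (ha _)) n

/-- A right ideal of `A(f)` is graded if it is generated by its homogeneous elements. -/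
def IsGraded (P : Submodule (GWA k f)ᵐᵒᵖ (GWA k f)) : Prop :=
  P = Submodule.span (GWA k f)ᵐᵒᵖ {m | m ∈ P ∧ ∃ n : ℤ, m ∈ gwaComp k f n}

theorem exists_eq_of_mem_gwaComp {n : ℤ} {m : GWA k f} (hm : m ∈ gwaComp k f n) :
    ∃ q : k[X], m = aeval (gwaZ k f) q * gwaMon k f n := by
  induction hm using Submodule.span_induction with
  | mem _ hm => exact hm
  | zero => exact ⟨0, by simp⟩
  | add a b _ _ ha hb =>
    obtain ⟨p, rfl⟩ := ha
    obtain ⟨q, rfl⟩ := hb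
    exact ⟨p + q, by rw [map_add, add_mul]⟩
  | smul r a _ ha =>
    obtain ⟨p, rfl⟩ := ha
    exact ⟨r • p, by rw [map_smul, smul_mul_assoc]⟩

theorem IsGraded.aeval_mul_mem (hP : IsGraded P) (s : k[X]) {p : GWA k f} (hp : p ∈ P) :
    aeval (gwaZ k f) s * p ∈ P := by
  rw [hP] at hp
  induction hp using Submodule.span_induction with
  | mem m hm =>
    obtain ⟨hmP, n, hmn⟩ := hm
    obtain ⟨q, rfl⟩ := exists_eq_of_mem_gwaComp hmn
    rw [← mul_assoc, ← map_mul, mul_comm, map_mul, mul_assoc, aeval_mul_mon, ← mul_assoc]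
    exact mul_mem_right hmP _
  | zero => simp
  | add a b _ _ ha hb =>
    rw [mul_add]
    exact P.add_mem ha hb
  | smul r a _ ha =>
    rw [mul_smul_comm]
    exact P.smul_mem r ha

theorem IsGraded.coeff_mem_coeffIdeal (hP : IsGraded P) {p : GWA k f} (hp : p ∈ P) (n : ℤ) :
    coeff p n ∈ coeffIdeal P n := by
  rw [hP] at hp
  induction hp using Submodule.span_induction generalizing n with
  | mem m hm =>
    obtain ⟨hmP, i, hmi⟩ := hm
    obtain ⟨q, rfl⟩ := exists_eq_of_mem_gwaComp hmi
    rcases eq_or_ne n i with rfl | hn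
    · exact ⟨_, hmP, by simp [coeff_monomial]⟩
    · simp [coeff_monomial, hn]
  | zero => simp
  | add a b _ _ ha hb =>
    rw [map_add]
    exact add_mem (ha n) (hb n)
  | smul r a _ ha => exact coeff_mul_mem_coeffIdeal ha r.unop n

theorem coeffIdeal_ne_bot (hf : f ≠ 0) (hP : IsGraded P) (hne : P ≠ ⊥) (n : ℤ) :
    coeffIdeal P n ≠ ⊥ := by
  obtain ⟨p, hp, hp0⟩ := P.ne_bot_iff.1 hne
  obtain ⟨m, hm⟩ : ∃ m, coeff p m ≠ 0 := by
    by_contra! h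
    exact hp0 (coeff_injective hf ((funext h).trans (map_zero coeff).symm))
  exact (Submodule.ne_bot_iff _).2
    ⟨_, mul_shiftProd_mem_coeffIdeal (hP.coeff_mem_coeffIdeal hp m) n,
      mul_ne_zero hm (shiftProd_ne_zero hf n m)⟩

/-- The action of `k[z]` by left multiplication on a graded right ideal. -/
def leftMul (hP : IsGraded P) : k[X] →+* Module.End (GWA k f)ᵐᵒᵖ P where
  toFun s := (LinearMap.mulLeft (GWA k f)ᵐᵒᵖ (aeval (gwaZ k f) s)).restrict fun _ =>
    hP.aeval_mul_mem s
  map_one' := by ext; simp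
  map_zero' := by ext; simp
  map_mul' s t := by
    ext p
    exact (congrArg (· * (p : GWA k f)) (map_mul (aeval _) s t)).trans (mul_assoc ..)
  map_add' s t := by
    ext p
    exact (congrArg (· * (p : GWA k f)) (map_add (aeval _) s t)).trans (add_mul ..)

theorem factorsThroughProjective_leftMul (hf : f ≠ 0) (hP : IsGraded P) {n : ℤ} {h s : k[X]}
    (hh : h ∈ coeffIdeal P n) (hh0 : h ≠ 0)
    (hs : ∀ j, ∀ g ∈ coeffIdeal P j, h * shiftProd f j n ∣ s * g) :
    FactorsThroughProjective (R := (GWA k f)ᵐᵒᵖ) (P := P) (leftMul hP s) := by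
  obtain ⟨u, hu, huh⟩ := hh
  let r : GWA k f →ₗ[(GWA k f)ᵐᵒᵖ] P :=
    (LinearMap.mulLeft (GWA k f)ᵐᵒᵖ u).codRestrict P fun b => mul_mem_right hu b
  have hr : Function.Injective r := fun a b hab =>
    isLeftRegular_of_coeff_eq_single hf hh0 huh (congrArg Subtype.val hab)
  refine .of_forall_mem_range hr fun p => ?_
  obtain ⟨b, hb⟩ := exists_coeff_mul_eq hf hh0 huh
    (finite_support_coeff (aeval (gwaZ k f) s * (p : GWA k f))) fun j => by
      rw [coeff_aeval_mul]
      exact hs j _ (hP.coeff_mem_coeffIdeal p.2 j)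
  exact ⟨b, Subtype.ext (coeff_injective hf hb)⟩

end RightIdeals

section StructureConstants

/-- A generator of the `n`-th coefficient ideal of `P`. -/
def gen (P : Submodule (GWA k f)ᵐᵒᵖ (GWA k f)) (n : ℤ) : k[X] :=
  Submodule.IsPrincipal.generator (coeffIdeal P n)

theorem mem_coeffIdeal_iff_gen_dvd {n : ℤ} {h : k[X]} : h ∈ coeffIdeal P n ↔ gen P n ∣ h :=
  Submodule.IsPrincipal.mem_iff_generator_dvd _

theorem gen_mem_coeffIdeal (n : ℤ) : gen P n ∈ coeffIdeal P n :=
  Submodule.IsPrincipal.generator_mem _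

theorem gen_ne_zero (hf : f ≠ 0) (hP : IsGraded P) (hne : P ≠ ⊥) (n : ℤ) : gen P n ≠ 0 :=
  fun h => coeffIdeal_ne_bot hf hP hne n
    ((Submodule.IsPrincipal.eq_bot_iff_generator_eq_zero _).2 h)

theorem gen_dvd_gen_mul_shiftProd (j n : ℤ) : gen P j ∣ gen P n * shiftProd f j n :=
  mem_coeffIdeal_iff_gen_dvd.1 (mul_shiftProd_mem_coeffIdeal (gen_mem_coeffIdeal n) j)

theorem gen_dvd_gen_of_le {n j : ℤ} (h : n ≤ j) : gen P j ∣ gen P n := by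
  simpa [shiftProd_of_le h] using gen_dvd_gen_mul_shiftProd (P := P) j n

theorem gen_dvd_gen_add_one_mul (n : ℤ) : gen P n ∣ gen P (n + 1) * taylor (n : k) f := by
  simpa [shiftProd_self_add_one] using gen_dvd_gen_mul_shiftProd (P := P) n (n + 1)

/-- The structure constant measuring multiplication by `x` from degree `n` to degree `n + 1`
of `P`: it is a unit exactly when this multiplication is onto. -/
def xStep (P : Submodule (GWA k f)ᵐᵒᵖ (GWA k f)) (n : ℤ) : k[X] :=
  (gen_dvd_gen_of_le (P := P) (by lia : n ≤ n + 1)).choose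

/-- The structure constant measuring multiplication by `y` from degree `n + 1` to degree `n`
of `P`; complementary to `xStep P n`. -/
def yStep (P : Submodule (GWA k f)ᵐᵒᵖ (GWA k f)) (n : ℤ) : k[X] :=
  (gen_dvd_gen_add_one_mul (P := P) n).choose

theorem gen_add_one_mul_xStep (n : ℤ) : gen P (n + 1) * xStep P n = gen P n :=
  (gen_dvd_gen_of_le (P := P) (by lia : n ≤ n + 1)).choose_spec.symm

theorem gen_mul_yStep (n : ℤ) : gen P n * yStep P n = gen P (n + 1) * taylor (n : k) f :=
  (gen_dvd_gen_add_one_mul (P := P) n).choose_spec.symm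

theorem xStep_mul_yStep (hf : f ≠ 0) (hP : IsGraded P) (hne : P ≠ ⊥) (n : ℤ) :
    xStep P n * yStep P n = taylor (n : k) f := by
  refine mul_left_cancel₀ (gen_ne_zero hf hP hne (n + 1)) ?_
  rw [← mul_assoc, gen_add_one_mul_xStep, gen_mul_yStep]

theorem gen_mul_prod_xStep {n j : ℤ} (h : n ≤ j) :
    gen P j * ∏ i ∈ Finset.Ico n j, xStep P i = gen P n := by
  induction j, h using Int.leInduction with
  | base => simp
  | succ j hj ih =>
    rw [← Finset.prod_Ico_mul_eq_prod_Ico_add_one hj, mul_left_comm, gen_add_one_mul_xStep,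
      mul_comm, ih]

theorem gen_mul_prod_yStep {j n : ℤ} (h : j ≤ n) :
    gen P j * ∏ i ∈ Finset.Ico j n, yStep P i = gen P n * shiftProd f j n := by
  induction n, h using Int.leInduction with
  | base => simp [shiftProd]
  | succ n hn ih =>
    rw [← Finset.prod_Ico_mul_eq_prod_Ico_add_one hn, ← mul_assoc, ih, mul_right_comm,
      gen_mul_yStep, mul_assoc, ← shiftProd_self_add_one, mul_comm (shiftProd f n _),
      shiftProd_mul_shiftProd hn (by lia)]

theorem eventually_isUnit_xStep (hf : f ≠ 0) (hP : IsGraded P) (hne : P ≠ ⊥) :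
    ∀ᶠ i in Filter.atTop, IsUnit (xStep P i) := by
  rw [← Nat.map_cast_int_atTop, Filter.eventually_map]
  refine eventually_isUnit_of_eq_mul (q := fun m : ℕ => gen P m)
    (fun m => gen_ne_zero hf hP hne m) fun m => ?_
  rw [Nat.cast_succ, gen_add_one_mul_xStep]

theorem eventually_isUnit_yStep (hf : f ≠ 0) (hP : IsGraded P) (hne : P ≠ ⊥) :
    ∀ᶠ i in Filter.atBot, IsUnit (yStep P i) := by
  have hdvd (n : ℤ) : shiftProd f n 0 ∣ gen P n :=
    shiftProd_dvd_of_mem_coeffIdeal (gen_mem_coeffIdeal n)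
  choose r hr using hdvd
  have hr0 (n : ℤ) : r n ≠ 0 := right_ne_zero_of_mul (hr n ▸ gen_ne_zero hf hP hne n)
  have hstep {n : ℤ} (hn : n < 0) : r (n + 1) = r n * yStep P n := by
    have hprod : taylor (n : k) f * shiftProd f (n + 1) 0 = shiftProd f n 0 := by
      rw [← shiftProd_self_add_one, shiftProd_mul_shiftProd (by lia) hn]
    refine mul_left_cancel₀ (shiftProd_ne_zero hf n 0) ?_
    rw [← mul_assoc, ← hr, gen_mul_yStep, hr, ← hprod]
    ring
  have hnat : ∀ᶠ m : ℕ in Filter.atTop, IsUnit (yStep P (-(m + 1))) :=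
    eventually_isUnit_of_eq_mul (q := fun m : ℕ => r (-m)) (fun m => hr0 _) fun m => by
      rw [Nat.cast_succ, ← hstep (by lia)]
      congr 1
      ring
  obtain ⟨N, hN⟩ := Filter.eventually_atTop.1 hnat
  refine Filter.eventually_atBot.2 ⟨-(N + 1), fun i hi => ?_⟩
  obtain ⟨m, rfl⟩ : ∃ m : ℕ, i = -(m + 1) := ⟨(-i - 1).toNat, by lia⟩
  exact hN m (by lia)

theorem gen_mul_shiftProd_dvd {n : ℤ} {s t : k[X]}
    (hs : ∀ T : Finset ℤ, ↑T ⊆ Set.Ici n → ∏ i ∈ T, xStep P i ∣ s)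
    (ht : ∀ T : Finset ℤ, ↑T ⊆ Set.Iio n → ∏ i ∈ T, yStep P i ∣ t) (j : ℤ) :
    gen P n * shiftProd f j n ∣ s * t * gen P j := by
  rcases le_total n j with hj | hj
  · rw [shiftProd_of_le hj, mul_one, ← gen_mul_prod_xStep hj, mul_comm (s * t)]
    refine mul_dvd_mul_left _ ((hs _ fun i hi => ?_).mul_right t)
    exact (Finset.mem_Ico.1 hi).1
  · rw [← gen_mul_prod_yStep hj, mul_comm (s * t)]
    refine mul_dvd_mul_left _ ((ht _ fun i hi => ?_).mul_left s)
    exact (Finset.mem_Ico.1 hi).2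

/-- At a maximal ideal `M` of `k[z]`, the hypothesis lets one pick a degree from which `P` is
generated locally at `M`. -/
theorem projective_of_forall_isMaximal_lt (hf : f ≠ 0) (hP : IsGraded P) (hne : P ≠ ⊥)
    (h : ∀ M : Ideal k[X], M.IsMaximal → ∀ i j, xStep P i ∈ M → yStep P j ∈ M → i < j) :
    Module.Projective (GWA k f)ᵐᵒᵖ P := by
  refine projective_of_forall_isMaximal (R := (GWA k f)ᵐᵒᵖ) (P := P) (leftMul hP) fun M hM => ?_
  have hxtop := eventually_isUnit_xStep hf hP hne
  have hybot := eventually_isUnit_yStep hf hP hne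
  have hunit {u : k[X]} (hu : IsUnit u) : u ∉ M := fun huM =>
    hM.ne_top (M.eq_top_of_isUnit_mem huM hu)
  obtain ⟨n, hx, hy⟩ := exists_forall_ge_not_forall_lt_not (p := (xStep P · ∈ M))
    (q := (yStep P · ∈ M)) (hxtop.mono fun _ => hunit) (hybot.mono fun _ => hunit) (h M hM)
  obtain ⟨s, hsM, hs⟩ := exists_notMem_forall_prod_dvd (T := Set.Ici n) hx <| by
    obtain ⟨N, hN⟩ := Filter.eventually_atTop.1 hxtop
    exact (Set.finite_Ico n N).subset fun i hi => ⟨hi.1, lt_of_not_ge fun hNi => hi.2 (hN i hNi)⟩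
  obtain ⟨t, htM, ht⟩ := exists_notMem_forall_prod_dvd (T := Set.Iio n) hy <| by
    obtain ⟨N, hN⟩ := Filter.eventually_atBot.1 hybot
    exact (Set.finite_Ioo N n).subset fun i hi => ⟨lt_of_not_ge fun hiN => hi.2 (hN i hiN), hi.1⟩
  refine ⟨s * t, fun hst => (hM.isPrime.mem_or_mem hst).elim hsM htM, ?_⟩
  refine factorsThroughProjective_leftMul hf hP (gen_mem_coeffIdeal n) (gen_ne_zero hf hP hne n)
    fun j g hg => (gen_mul_shiftProd_dvd hs ht j).trans ?_
  exact mul_dvd_mul_left _ (mem_coeffIdeal_iff_gen_dvd.1 hg)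

end StructureConstants

section WeightIdeal

/-- The right ideal `(y^m, x, z)A(f)`; it is `Icong k α` for `f = z(z + α)` and `m = α`. -/
abbrev weightIdeal (f : k[X]) (m : ℕ) : Submodule (GWA k f)ᵐᵒᵖ (GWA k f) :=
  Submodule.span (GWA k f)ᵐᵒᵖ {gwaY k f ^ m, gwaX k f, gwaZ k f}

theorem mon_one : gwaMon k f 1 = gwaX k f := by
  simpa using mon_natCast (f := f) 1

theorem shiftProd_dvd_of_dvd_mul (hf : f ≠ 0) {m : ℕ} {n : ℤ} {v : k[X]}
    (h : shiftProd f (n - m) 0 ∣ v * shiftProd f (n - m) n) : shiftProd f n 0 ∣ v := by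
  rcases le_total 0 n with hn | hn
  · rw [shiftProd_of_le hn]
    exact one_dvd v
  · rw [← shiftProd_mul_shiftProd (by lia : n - m ≤ n) hn, mul_comm v] at h
    exact (mul_dvd_mul_iff_left (shiftProd_ne_zero hf _ _)).1 h

theorem coeff_map_Z_mul_shiftProd (ψ : P →ₗ[(GWA k f)ᵐᵒᵖ] GWA k f) (hZ : gwaZ k f ∈ P) {i : ℤ}
    (hi : gwaMon k f i ∈ P) (n : ℤ) :
    coeff (ψ ⟨_, hZ⟩) n * shiftProd f (n + i) n =
      coeff (ψ ⟨_, hi⟩) (n + i) * (X + C (n : k)) := by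
  have hsyz : gwaZ k f * gwaMon k f i =
      gwaMon k f i * aeval (gwaZ k f) (taylor (-i : k) X) := by
    rw [← aeval_mul_mon, aeval_X]
  have hmap : ψ ⟨_, hZ⟩ * gwaMon k f i =
      ψ ⟨_, hi⟩ * aeval (gwaZ k f) (taylor (-i : k) X) :=
    calc _ = ψ (op (gwaMon k f i) • ⟨_, hZ⟩) := (ψ.map_smul ..).symm
      _ = ψ (op (aeval (gwaZ k f) (taylor (-i : k) X)) • ⟨_, hi⟩) :=
        congrArg ψ (Subtype.ext hsyz)
      _ = _ := ψ.map_smul ..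
  have h := congrFun (congrArg coeff hmap) (n + i)
  rw [coeff_mul_mon, coeff_mul_aeval, add_sub_cancel_right, taylor_taylor] at h
  simpa using h

theorem exists_map_mon_eq_mul (hf : f ≠ 0) (ψ : P →ₗ[(GWA k f)ᵐᵒᵖ] GWA k f)
    (hZ : gwaZ k f ∈ P) (hX : gwaMon k f 1 ∈ P) {m : ℕ} (hY : gwaMon k f (-m) ∈ P) :
    ∃ c, ψ ⟨_, hZ⟩ = c * gwaZ k f ∧ ∀ i (hi : gwaMon k f i ∈ P), ψ ⟨_, hi⟩ = c * gwaMon k f i := by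
  have hv (n : ℤ) : coeff (ψ ⟨_, hZ⟩) n = coeff (ψ ⟨_, hX⟩) (n + 1) * (X + C (n : k)) := by
    simpa [shiftProd_of_le] using coeff_map_Z_mul_shiftProd ψ hZ hX n
  have hmon (i : ℤ) (hi : gwaMon k f i ∈ P) (n : ℤ) :
      coeff (ψ ⟨_, hX⟩) (n + 1) * shiftProd f (n + i) n = coeff (ψ ⟨_, hi⟩) (n + i) := by
    refine mul_right_cancel₀ (X_add_C_ne_zero (n : k)) ?_
    rw [← coeff_map_Z_mul_shiftProd ψ hZ, hv, mul_right_comm]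
  have hdvd (n : ℤ) : shiftProd f n 0 ∣ coeff (ψ ⟨_, hX⟩) (n + 1) := by
    refine shiftProd_dvd_of_dvd_mul (m := m) hf ?_
    rw [sub_eq_add_neg, hmon _ hY]
    exact shiftProd_dvd_coeff _ _
  obtain ⟨c, hc⟩ := exists_coeff_mul_eq hf one_ne_zero coeff_one
    (g := fun n => coeff (ψ ⟨_, hX⟩) (n + 1))
    ((finite_support_coeff _).preimage (add_left_injective 1).injOn) (by simpa using hdvd)
  rw [one_mul] at hc
  refine ⟨c, coeff_injective hf (funext fun n => ?_),
    fun i hi => coeff_injective hf (funext fun n => ?_)⟩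
  · conv_rhs => rw [← aeval_X (R := k) (gwaZ k f), coeff_mul_aeval, hc, taylor_X]
    exact hv n
  · rw [coeff_mul_mon, hc]
    simpa using (hmon i hi (n - i)).symm

/-- `Ext¹(A / (y^m, x, z)A, A) = 0`. -/
theorem exists_extend_weightIdeal (hf : f ≠ 0) {m : ℕ}
    (ψ : weightIdeal f m →ₗ[(GWA k f)ᵐᵒᵖ] GWA k f) :
    ∃ Ψ : GWA k f →ₗ[(GWA k f)ᵐᵒᵖ] GWA k f, Ψ ∘ₗ (weightIdeal f m).subtype = ψ := by
  have hY : gwaMon k f (-m) ∈ weightIdeal f m :=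
    Submodule.subset_span (by simp [mon_neg_natCast])
  have hX : gwaMon k f 1 ∈ weightIdeal f m := Submodule.subset_span (by simp [mon_one])
  have hZ : gwaZ k f ∈ weightIdeal f m := Submodule.subset_span (by simp)
  obtain ⟨c, hcZ, hcmon⟩ := exists_map_mon_eq_mul hf ψ hZ hX hY
  refine ⟨LinearMap.mulLeft _ c, LinearMap.ext_on Submodule.span_span_coe_preimage ?_⟩
  rintro ⟨b, hb⟩ (rfl | rfl | rfl)
  · have hcY : ψ ⟨gwaY k f ^ m, hb⟩ = c * gwaY k f ^ m := by
      simpa only [mon_neg_natCast] using hcmon _ hY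
    exact hcY.symm
  · have hcX : ψ ⟨gwaX k f, hb⟩ = c * gwaX k f := by simpa only [mon_one] using hcmon _ hX
    exact hcX.symm
  · exact hcZ.symm

theorem extensionsSplit_quotient_weightIdeal (hf : f ≠ 0) {m : ℕ} {Q : Type} [AddCommGroup Q]
    [Module (GWA k f)ᵐᵒᵖ Q] [Module.Projective (GWA k f)ᵐᵒᵖ Q] :
    ExtensionsSplit (GWA k f)ᵐᵒᵖ (GWA k f ⧸ weightIdeal f m) Q := by
  have : Module.Finite (GWA k f)ᵐᵒᵖ (weightIdeal f m) := .span_of_finite _ (by simp)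
  refine extensionsSplit_quotient_of_forall_exists_extend (R := (GWA k f)ᵐᵒᵖ)
    (exists_extend_of_projective fun ψ => ?_)
  obtain ⟨Ψ, hΨ⟩ := exists_extend_weightIdeal hf ((opEquivSelf _).toLinearMap ∘ₗ ψ)
  refine ⟨(opEquivSelf _).symm.toLinearMap ∘ₗ Ψ, ?_⟩
  rw [LinearMap.comp_assoc, hΨ, ← LinearMap.comp_assoc, LinearEquiv.symm_comp, LinearMap.id_comp]

theorem hom_quotient_weightIdeal_eq_zero (hf : f ≠ 0) {m : ℕ}
    (ψ : (GWA k f ⧸ weightIdeal f m) →ₗ[(GWA k f)ᵐᵒᵖ] GWA k f) : ψ = 0 := by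
  set ψ₁ : GWA k f →ₗ[(GWA k f)ᵐᵒᵖ] GWA k f := ψ ∘ₗ (weightIdeal f m).mkQ with hψ₁
  have hψ (b : GWA k f) : ψ₁ b = ψ₁ 1 * b :=
    calc ψ₁ b = ψ₁ (op b • (1 : GWA k f)) := by rw [op_smul_eq_mul, one_mul]
      _ = op b • ψ₁ 1 := ψ₁.map_smul _ _
  have hZ : ψ₁ 1 * aeval (gwaZ k f) (X : k[X]) = 0 := by
    have hmk : (weightIdeal f m).mkQ (gwaZ k f) = 0 :=
      (Submodule.Quotient.mk_eq_zero _).2 (Submodule.subset_span (by simp))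
    rw [aeval_X, ← hψ, hψ₁, LinearMap.comp_apply, hmk, map_zero]
  have hone : ψ₁ 1 = 0 := by
    refine coeff_injective hf (funext fun n => ?_)
    have hn := congrFun (congrArg coeff hZ) n
    rw [coeff_mul_aeval, taylor_X, map_zero, Pi.zero_apply, mul_eq_zero] at hn
    rw [hn.resolve_right (X_add_C_ne_zero _), map_zero, Pi.zero_apply]
  refine Submodule.linearMap_qext _ (LinearMap.ext fun b => ?_)
  exact (hψ b).trans (by rw [hone, zero_mul]; rfl)

/-- The witness is the map `A / (y^m, x, z)A → A / P` sending `1` to the homogeneous element of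
degree `n` with coefficient `v`. -/
theorem mem_coeffIdeal_of_hom_eq_zero (hf : f ≠ 0) {m : ℕ}
    (hHom : ∀ φ : (GWA k f ⧸ weightIdeal f m) →ₗ[(GWA k f)ᵐᵒᵖ] (GWA k f ⧸ P), φ = 0)
    {n : ℤ} {v : k[X]} (hx : v ∈ coeffIdeal P (n + 1)) (hz : v * (X + C (n : k)) ∈ coeffIdeal P n)
    (hy : v * shiftProd f (n - m) n ∈ coeffIdeal P (n - m)) : v ∈ coeffIdeal P n := by
  obtain ⟨w, rfl⟩ := shiftProd_dvd_of_dvd_mul hf (shiftProd_dvd_of_mem_coeffIdeal hy)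
  set v := shiftProd f n 0 * w
  obtain ⟨c, hc⟩ : ∃ c : GWA k f, coeff c = Pi.single n v :=
    ⟨aeval (gwaZ k f) w * gwaMon k f n, by rw [coeff_monomial, mul_comm]⟩
  have hmon (i : ℤ) (hi : v * shiftProd f (n + i) n ∈ coeffIdeal P (n + i)) :
      c * gwaMon k f i ∈ P :=
    mem_of_coeff_eq_single hf (by rw [coeff_mul, hc, act_mon_single]) hi
  have hle : weightIdeal f m ≤ P.comap (LinearMap.mulLeft _ c) := by
    rw [Submodule.span_le]
    rintro b (rfl | rfl | rfl)
    · rw [← mon_neg_natCast]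
      exact hmon _ hy
    · rw [← mon_one]
      exact hmon 1 (by rwa [shiftProd_of_le (by lia), mul_one])
    · change c * gwaZ k f ∈ P
      refine mem_of_coeff_eq_single hf (h := v * (X + C (n : k))) ?_ hz
      rw [coeff_mul, hc, ← aeval_X (R := k) (gwaZ k f), act_aeval_single,
        taylor_X]
  have h := LinearMap.congr_fun (hHom ((weightIdeal f m).mapQ P (LinearMap.mulLeft _ c) hle))
    (Submodule.Quotient.mk 1)
  exact ⟨c, by simpa using h, hc⟩

theorem not_dvd_yStep_of_dvd_xStep (hf : f ≠ 0) (hP : IsGraded P) (hne : P ≠ ⊥) {m : ℕ}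
    (hm : 0 < m) (hHom : ∀ φ : (GWA k f ⧸ weightIdeal f m) →ₗ[(GWA k f)ᵐᵒᵖ] (GWA k f ⧸ P), φ = 0)
    {n : ℤ} (hx : X + C (n : k) ∣ xStep P n) : ¬X + C (n : k) ∣ yStep P (n - m) := by
  intro hy
  have hX0 : (X + C (n : k)) ≠ 0 := X_add_C_ne_zero _
  obtain ⟨e, he⟩ := hx
  have hgen : gen P (n + 1) * e * (X + C (n : k)) = gen P n := by
    rw [← gen_add_one_mul_xStep n, he]
    ring
  have hv0 : gen P (n + 1) * e ≠ 0 := left_ne_zero_of_mul (hgen ▸ gen_ne_zero hf hP hne n)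
  obtain ⟨r, hr⟩ : X + C (n : k) ∣ ∏ i ∈ Finset.Ico (n - m) n, yStep P i :=
    hy.trans (Finset.dvd_prod_of_mem _ (Finset.mem_Ico.2 (by lia)))
  have hyv : gen P (n + 1) * e * shiftProd f (n - m) n = gen P (n - m) * r := by
    refine mul_left_cancel₀ hX0 ?_
    have hprod := gen_mul_prod_yStep (P := P) (by lia : n - m ≤ n)
    rw [hr, ← hgen] at hprod
    linear_combination -hprod
  have hv : gen P (n + 1) * e ∈ coeffIdeal P n := by
    refine mem_coeffIdeal_of_hom_eq_zero hf hHom ?_ ?_ ?_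
    · exact Ideal.mul_mem_right _ _ (gen_mem_coeffIdeal _)
    · exact hgen ▸ gen_mem_coeffIdeal n
    · exact hyv ▸ Ideal.mul_mem_right _ _ (gen_mem_coeffIdeal _)
  rw [mem_coeffIdeal_iff_gen_dvd, ← hgen] at hv
  exact not_isUnit_X_add_C (n : k)
    (isUnit_of_dvd_one ((mul_dvd_mul_iff_left hv0).1 (by rwa [mul_one])))

end WeightIdeal

section CongruentRoots

variable {α : ℕ+}

/-- The polynomial `z(z + α)` defining `Acong k α`. -/
abbrev congPoly (k : Type) [Field k] (α : ℕ+) : k[X] := X * (X + C (α : k))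

theorem congPoly_ne_zero : congPoly k α ≠ 0 := mul_ne_zero X_ne_zero (X_add_C_ne_zero _)

theorem taylor_congPoly (i : ℤ) :
    taylor (i : k) (congPoly k α) = (X + C (i : k)) * (X + C ((i + α : ℤ) : k)) := by
  rw [taylor_mul, map_add, taylor_X, taylor_C, Int.cast_add, Int.cast_natCast, C_add, add_assoc]

theorem separable_taylor_congPoly [CharZero k] (i : ℤ) :
    (taylor (i : k) (congPoly k α)).Separable := by
  rw [taylor_congPoly]
  refine (separable_X_add_C _).mul (separable_X_add_C _) (isCoprime_X_add_intCast ?_)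
  have := α.pos
  lia

variable {P : Submodule (GWA k (congPoly k α))ᵐᵒᵖ (GWA k (congPoly k α))} {M : Ideal k[X]}

theorem X_add_intCast_mem_of_taylor_mem (hM : M.IsPrime) {i : ℤ}
    (h : taylor (i : k) (congPoly k α) ∈ M) :
    ∃ m : ℤ, X + C (m : k) ∈ M ∧ (i = m ∨ i = m - α) := by
  rw [taylor_congPoly] at h
  rcases hM.mem_or_mem h with h | h
  · exact ⟨i, h, .inl rfl⟩
  · exact ⟨i + α, h, .inr (by lia)⟩

theorem lt_of_xStep_mem_of_yStep_mem [CharZero k] (hP : IsGraded P) (hne : P ≠ ⊥)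
    (hHom : ∀ φ : (Acong k α ⧸ Icong k α) →ₗ[(Acong k α)ᵐᵒᵖ] (Acong k α ⧸ P), φ = 0)
    (hM : M.IsMaximal) {i j : ℤ} (hi : xStep P i ∈ M) (hj : yStep P j ∈ M) : i < j := by
  have hxy (n : ℤ) : xStep P n * yStep P n = taylor (n : k) (congPoly k α) :=
    xStep_mul_yStep congPoly_ne_zero hP hne n
  have hij : i ≠ j := by
    rintro rfl
    exact not_isCoprime_of_mem hM.ne_top hi hj
      (Separable.isCoprime (hxy i ▸ separable_taylor_congPoly i))
  obtain ⟨m, hm, him⟩ := X_add_intCast_mem_of_taylor_mem hM.isPrime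
    (hxy i ▸ M.mul_mem_right _ hi)
  obtain ⟨m', hm', hjm⟩ := X_add_intCast_mem_of_taylor_mem hM.isPrime
    (hxy j ▸ M.mul_mem_left _ hj)
  obtain rfl : m = m' := by
    by_contra hne
    exact not_isCoprime_of_mem hM.ne_top hm hm' (isCoprime_X_add_intCast hne)
  have hα : 0 < (α : ℕ) := α.pos
  rcases him with rfl | rfl <;> rcases hjm with rfl | rfl
  · exact absurd rfl hij
  · exact absurd (X_add_C_dvd_of_mem hM.ne_top hm hj)
      (not_dvd_yStep_of_dvd_xStep congPoly_ne_zero hP hne hα hHom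
        (X_add_C_dvd_of_mem hM.ne_top hm hi))
  · lia
  · exact absurd rfl hij

theorem projective_of_hom_eq_zero [CharZero k] (hP : IsGraded P)
    (hHom : ∀ φ : (Acong k α ⧸ Icong k α) →ₗ[(Acong k α)ᵐᵒᵖ] (Acong k α ⧸ P), φ = 0) :
    Module.Projective (Acong k α)ᵐᵒᵖ P := by
  rcases eq_or_ne P ⊥ with rfl | hne
  · infer_instance
  · exact projective_of_forall_isMaximal_lt congPoly_ne_zero hP hne fun M hM i j =>
      lt_of_xStep_mem_of_yStep_mem hP hne hHom hM

end CongruentRoots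

end GWA

theorem projective_tfae_congruent_root_general
    (k : Type) [Field k] [CharZero k] (α : ℕ+)
    (P : Submodule (Acong k α)ᵐᵒᵖ (Acong k α))
    (hgr : P = Submodule.span (Acong k α)ᵐᵒᵖ
      {m | m ∈ P ∧ ∃ n : ℤ, m ∈ gwaComp k (X * (X + C (α : k))) n}) :
    List.TFAE [
      Module.Projective (Acong k α)ᵐᵒᵖ ↥P,
      ∀ (E : Type) (_ : AddCommGroup E) (_ : Module (Acong k α)ᵐᵒᵖ E)
        (ι : ↥P →ₗ[(Acong k α)ᵐᵒᵖ] E)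
        (π : E →ₗ[(Acong k α)ᵐᵒᵖ] (Acong k α ⧸ Icong k α)),
        Function.Injective ι → Function.Surjective π →
        LinearMap.range ι = LinearMap.ker π →
        ∃ s : (Acong k α ⧸ Icong k α) →ₗ[(Acong k α)ᵐᵒᵖ] E, π.comp s = LinearMap.id,
      ∀ φ : (Acong k α ⧸ Icong k α) →ₗ[(Acong k α)ᵐᵒᵖ] (Acong k α ⧸ P), φ = 0,
      ∃ (Q : Type) (_ : AddCommGroup Q) (_ : Module (Acong k α)ᵐᵒᵖ Q)
        (g : Q →ₗ[(Acong k α)ᵐᵒᵖ] (Acong k α ⧸ P)),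
        Module.Projective (Acong k α)ᵐᵒᵖ Q ∧ Function.Surjective g ∧
        Module.Projective (Acong k α)ᵐᵒᵖ ↥(LinearMap.ker g)] := by
  tfae_have 1 ↔ 4 := projective_iff_exists_projective_ker
  tfae_have 1 → 2 := fun _ =>
    GWA.extensionsSplit_quotient_weightIdeal (m := α) (Q := P) GWA.congPoly_ne_zero
  tfae_have 2 → 3 := fun hExt => hom_quotient_eq_zero_of_extensionsSplit hExt
    (GWA.hom_quotient_weightIdeal_eq_zero GWA.congPoly_ne_zero)
  tfae_have 3 → 1 := GWA.projective_of_hom_eq_zero hgr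
  tfae_finish

set_option maxHeartbeats 1000000 in
/-- Let `α ∈ ℕ⁺`, `f = z(z+α)`, and let `P` be a graded right ideal of
`A = A(f)`.  With `Z = A/(y^α, x, z)A` the finite-dimensional simple module, the
following are equivalent: (i) `P` is projective; (ii) `Ext¹_A(Z, P) = 0`, i.e. every
extension of `Z` by `P` splits; (iii) `Hom_A(Z, A/P) = 0`; (iv) `A/P` has projective
dimension at most 1. -/
theorem projective_tfae_congruent_root
    (k : Type) [Field k] [IsAlgClosed k] [CharZero k] (α : ℕ+)
    (P : Submodule (Acong k α)ᵐᵒᵖ (Acong k α))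
    -- `P` is a graded right ideal: it is generated by its homogeneous elements
    (hgr : P = Submodule.span (Acong k α)ᵐᵒᵖ
      {m | m ∈ P ∧ ∃ n : ℤ, m ∈ gwaComp k (X * (X + C (α : k))) n}) :
    List.TFAE [
      -- (i) P is projective
      Module.Projective (Acong k α)ᵐᵒᵖ ↥P,
      -- (ii) Ext¹_A(Z, P) = 0 : every extension of Z by P splits
      ∀ (E : Type) (_ : AddCommGroup E) (_ : Module (Acong k α)ᵐᵒᵖ E)
        (ι : ↥P →ₗ[(Acong k α)ᵐᵒᵖ] E)
        (π : E →ₗ[(Acong k α)ᵐᵒᵖ] (Acong k α ⧸ Icong k α)),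
        Function.Injective ι → Function.Surjective π →
        LinearMap.range ι = LinearMap.ker π →
        ∃ s : (Acong k α ⧸ Icong k α) →ₗ[(Acong k α)ᵐᵒᵖ] E, π.comp s = LinearMap.id,
      -- (iii) Hom_A(Z, A/P) = 0
      ∀ φ : (Acong k α ⧸ Icong k α) →ₗ[(Acong k α)ᵐᵒᵖ] (Acong k α ⧸ P), φ = 0,
      -- (iv) A/P has projective dimension at most 1
      ∃ (Q : Type) (_ : AddCommGroup Q) (_ : Module (Acong k α)ᵐᵒᵖ Q)
        (g : Q →ₗ[(Acong k α)ᵐᵒᵖ] (Acong k α ⧸ P)),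
        Module.Projective (Acong k α)ᵐᵒᵖ Q ∧ Function.Surjective g ∧
        Module.Projective (Acong k α)ᵐᵒᵖ ↥(LinearMap.ker g)] :=
  projective_tfae_congruent_root_general k α P hgr

end
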